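/- arXiv:1501.03682 — 4 statements merged into one kernel-verified Lean document; each statement's English description precedes it below -/
import Mathlib

section
/- For every integer n ≥ 2, every real μ > 1, and every integer m ≥ 1, the symbol factorizes as A^{(n,m)}(z) = 2^{-(n+1+m^{-μ})} (1+z)^{n-1} (z² + 2(2^{1+m^{-μ}} − 1) z + 1) for all z ∈ ℂ; moreover, for n ≥ 3 one has A^{(n,m)}(z) = ((1+z)/2) · A^{(n-1,m)}(z) for all z ∈ ℂ. -/
open MeasureTheory Filter Complex

/-- Binomial coefficient `binom p q` extended to integer `q`, zero outside `0 ≤ q ≤ p`. -/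
noncomputable def binomZ (p : ℕ) (q : ℤ) : ℝ :=
  if 0 ≤ q then (p.choose q.toNat : ℝ) else 0

/-- The nonstationary mask `a^{(n,m)}_α` with tension parameter `μ`. -/
noncomputable def maskNS (n m : ℕ) (μ : ℝ) (α : ℤ) : ℝ :=
  if m = 0 then (if α = 0 ∨ α = 1 then 1/2 else 0)
  else if 0 ≤ α ∧ α ≤ (n : ℤ) + 1 then
    (2 : ℝ) ^ (-((n : ℝ) + 1 + (m : ℝ) ^ (-μ))) *
      (binomZ (n+1) α + 4 * ((2 : ℝ) ^ ((m : ℝ) ^ (-μ)) - 1) * binomZ (n-1) (α-1))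
  else 0

/-- The symbol `A^{(n,m)}(z) = Σ_{α=0}^{n+1} a^{(n,m)}_α z^α`. -/
noncomputable def symbolNS (n m : ℕ) (μ : ℝ) (z : ℂ) : ℂ :=
  ∑ α ∈ Finset.range (n+2), (maskNS n m μ (α : ℤ) : ℂ) * z ^ α

/-!
Write `t = 2 ^ (m ^ (-μ))` and `c = 2 ^ (-(n + 1 + m ^ (-μ)))`. The binomial theorem, applied to the
two families of binomial coefficients in the mask, gives
`A^{(n,m)}(z) = c * ((1 + z) ^ (n + 1) + 4 * (t - 1) * z * (1 + z) ^ (n - 1))`,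
and the common factor `(1 + z) ^ (n - 1)` leaves `(1 + z) ^ 2 + 4 * (t - 1) * z`. Since `t` does
not depend on `n`, passing from `n - 1` to `n` multiplies the symbol by `1 + z` and halves `c`.
-/

theorem sum_range_choose_mul_pow {R : Type*} [CommSemiring R] {p N : ℕ} (hN : p < N) (x : R) :
    ∑ k ∈ Finset.range N, (p.choose k : R) * x ^ k = (1 + x) ^ p := by
  have hvanish : ∀ k ≥ p + 1, (p.choose k : R) * x ^ k = 0 := fun k hk => by
    rw [Nat.choose_eq_zero_of_lt hk, Nat.cast_zero, zero_mul]
  rw [Finset.eventually_constant_sum hvanish hN, add_comm 1 x, add_pow]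
  simp only [one_pow, mul_one, mul_comm]

theorem binomZ_natCast (p k : ℕ) : binomZ p k = p.choose k := by
  simp [binomZ]

theorem binomZ_of_neg (p : ℕ) {q : ℤ} (hq : q < 0) : binomZ p q = 0 :=
  if_neg hq.not_ge

theorem sum_range_binomZ_sub_mul_pow {p s N : ℕ} (hN : p + s < N) (z : ℂ) :
    ∑ α ∈ Finset.range N, (binomZ p ((α : ℤ) - s) : ℂ) * z ^ α = z ^ s * (1 + z) ^ p := by
  obtain ⟨M, rfl⟩ : ∃ M, N = s + M := Nat.exists_eq_add_of_le (by omega)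
  have hlow : ∑ α ∈ Finset.range s, (binomZ p ((α : ℤ) - s) : ℂ) * z ^ α = 0 := by
    refine Finset.sum_eq_zero fun α hα => ?_
    have hαs : α < s := Finset.mem_range.mp hα
    rw [binomZ_of_neg p (by omega), ofReal_zero, zero_mul]
  rw [Finset.sum_range_add, hlow, zero_add, ← sum_range_choose_mul_pow (by omega : p < M) z,
    Finset.mul_sum]
  refine Finset.sum_congr rfl fun k _ => ?_
  rw [Nat.cast_add, add_sub_cancel_left, binomZ_natCast, ofReal_natCast, pow_add]
  ring

theorem maskNS_natCast_of_le {n m α : ℕ} (hm : m ≠ 0) (hα : α ≤ n + 1) (μ : ℝ) :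
    maskNS n m μ α = (2 : ℝ) ^ (-((n : ℝ) + 1 + (m : ℝ) ^ (-μ))) *
      (binomZ (n + 1) α + 4 * ((2 : ℝ) ^ ((m : ℝ) ^ (-μ)) - 1) * binomZ (n - 1) (α - 1)) := by
  rw [maskNS, if_neg hm, if_pos (by omega)]

theorem symbolNS_eq_mul_pow_add_pow {n m : ℕ} (hm : m ≠ 0) (μ : ℝ) (z : ℂ) :
    symbolNS n m μ z =
      ((2 : ℝ) ^ (-((n : ℝ) + 1 + (m : ℝ) ^ (-μ))) : ℝ) *
        ((1 + z) ^ (n + 1) +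
          4 * (((2 : ℝ) ^ ((m : ℝ) ^ (-μ)) : ℝ) - 1) * (z * (1 + z) ^ (n - 1))) := by
  have hfst : ∑ α ∈ Finset.range (n + 2), (binomZ (n + 1) α : ℂ) * z ^ α = (1 + z) ^ (n + 1) := by
    simpa using sum_range_binomZ_sub_mul_pow (s := 0) (by omega : n + 1 + 0 < n + 2) z
  have hsnd : ∑ α ∈ Finset.range (n + 2), (binomZ (n - 1) ((α : ℤ) - 1) : ℂ) * z ^ α =
      z * (1 + z) ^ (n - 1) := by
    simpa using sum_range_binomZ_sub_mul_pow (s := 1) (by omega : n - 1 + 1 < n + 2) z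
  rw [← hfst, ← hsnd, Finset.mul_sum, ← Finset.sum_add_distrib, Finset.mul_sum]
  refine Finset.sum_congr rfl fun α hα => ?_
  rw [maskNS_natCast_of_le hm (by rw [Finset.mem_range] at hα; omega)]
  push_cast
  ring

theorem symbolNS_eq_mul_pow_mul_quadratic {n m : ℕ} (hn : n ≠ 0) (hm : m ≠ 0) (μ : ℝ) (z : ℂ) :
    symbolNS n m μ z =
      ((2 : ℝ) ^ (-((n : ℝ) + 1 + (m : ℝ) ^ (-μ))) : ℝ) * (1 + z) ^ (n - 1) *
        (z ^ 2 + 2 * (((2 : ℝ) ^ (1 + (m : ℝ) ^ (-μ)) - 1 : ℝ) : ℂ) * z + 1) := by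
  have hpow : (1 + z) ^ (n + 1) = (1 + z) ^ (n - 1) * (1 + z) ^ 2 := by
    rw [← pow_add]
    congr 1
    omega
  rw [symbolNS_eq_mul_pow_add_pow hm, hpow, Real.rpow_add two_pos, Real.rpow_one]
  push_cast
  ring

theorem symbolNS_succ {n m : ℕ} (hn : n ≠ 0) (hm : m ≠ 0) (μ : ℝ) (z : ℂ) :
    symbolNS (n + 1) m μ z = (1 + z) / 2 * symbolNS n m μ z := by
  have hscale : (2 : ℝ) ^ (-(((n + 1 : ℕ) : ℝ) + 1 + (m : ℝ) ^ (-μ))) =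
      (2 : ℝ) ^ (-((n : ℝ) + 1 + (m : ℝ) ^ (-μ))) / 2 := by
    rw [← Real.rpow_sub_one two_ne_zero]
    congr 1
    push_cast
    ring
  have hpow : (1 + z) ^ n = (1 + z) * (1 + z) ^ (n - 1) := (mul_pow_sub_one hn _).symm
  rw [symbolNS_eq_mul_pow_mul_quadratic n.add_one_ne_zero hm,
    symbolNS_eq_mul_pow_mul_quadratic hn hm, hscale, Nat.add_sub_cancel, hpow]
  push_cast
  ring

theorem symbolNS_factorization_general (n : ℕ) (hn : 1 ≤ n) (μ : ℝ) (m : ℕ) (hm : 1 ≤ m) (z : ℂ) :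
    symbolNS n m μ z =
      (((2 : ℝ) ^ (-((n : ℝ) + 1 + (m : ℝ) ^ (-μ))) : ℝ) : ℂ) * (1 + z) ^ (n - 1) *
        (z ^ 2 + 2 * ((((2 : ℝ) ^ (1 + (m : ℝ) ^ (-μ)) : ℝ) - 1 : ℝ) : ℂ) * z + 1) ∧
      (2 ≤ n → symbolNS n m μ z = ((1 + z) / 2) * symbolNS (n - 1) m μ z) := by
  have hm₀ : m ≠ 0 := Nat.one_le_iff_ne_zero.mp hm
  refine ⟨symbolNS_eq_mul_pow_mul_quadratic (Nat.one_le_iff_ne_zero.mp hn) hm₀ μ z, fun hn₂ => ?_⟩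
  have hsucc := symbolNS_succ (Nat.sub_ne_zero_of_lt hn₂) hm₀ μ z
  rwa [Nat.sub_add_cancel hn] at hsucc

/-- Factorization of the symbol `A^{(n,m)}`:
`A^{(n,m)}(z) = 2^{-(n+1+m^{-μ})} (1+z)^{n-1} (z² + 2(2^{1+m^{-μ}} − 1) z + 1)`,
and for `n ≥ 3` also `A^{(n,m)}(z) = ((1+z)/2) · A^{(n-1,m)}(z)`. -/
theorem symbolNS_factorization (n : ℕ) (hn : 2 ≤ n) (μ : ℝ) (hμ : 1 < μ)
    (m : ℕ) (hm : 1 ≤ m) (z : ℂ) :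
    symbolNS n m μ z =
      (((2 : ℝ) ^ (-((n : ℝ) + 1 + (m : ℝ) ^ (-μ))) : ℝ) : ℂ) * (1 + z) ^ (n - 1) *
        (z ^ 2 + 2 * ((((2 : ℝ) ^ (1 + (m : ℝ) ^ (-μ)) : ℝ) - 1 : ℝ) : ℂ) * z + 1) ∧
      (3 ≤ n → symbolNS n m μ z = ((1 + z) / 2) * symbolNS (n - 1) m μ z) := by
  obtain ⟨hfactor, hrec⟩ := symbolNS_factorization_general n (by omega) μ m hm z
  exact ⟨hfactor, fun hn₃ => hrec (Nat.le_of_succ_le hn₃)⟩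
end

section
/- For every integer n ≥ 2, every real μ > 1, and every integer m ≥ 1, the mask a^{(n,m)} is bell-shaped: a^{(n,m)}_α > 0 for all 0 ≤ α ≤ n+1; a^{(n,m)}_α = a^{(n,m)}_{n+1−α} for all α ∈ ℤ (central symmetry); and a^{(n,m)}_α < a^{(n,m)}_{α+1} for all integers α with 0 ≤ α ≤ ⌊(n+1)/2⌋ − 1 (strict increase up to the middle index). -/
open MeasureTheory Filter Complex

/-!
Write `d = 4 (2 ^ m ^ (-μ) - 1)`, which is nonnegative. Up to a positive factor the mask is the
`(n + 1)`-st row of Pascal's triangle plus `d` times the `(n - 1)`-st row moved one step to the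
right. Both rows are symmetric about `(n + 1) / 2` and do not decrease up to there, and the first
one is positive and strictly increases, so their combination has all three properties.
-/

theorem choose_lt_choose_succ_of_lt_half {p k : ℕ} (h : k < p / 2) :
    p.choose k < p.choose (k + 1) := by
  have hpos : 0 < p.choose k := Nat.choose_pos (by omega)
  refine lt_of_mul_lt_mul_right ?_ (Nat.zero_le (k + 1))
  calc p.choose k * (k + 1) < p.choose k * (p - k) := by gcongr; omega
    _ = p.choose (k + 1) * (k + 1) := (Nat.choose_succ_right_eq p k).symm

section BellShaped

variable {R : Type*}

/-- A sequence indexed by `ℤ` is bell-shaped on `[0, N]` if it is positive there, symmetric about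
`N / 2`, and strictly increasing up to the index `⌊N / 2⌋`; the last bound is encoded without
division, as `2 * (α + 1) ≤ N`. Symmetry is required on all of `ℤ`. -/
structure IsBellShaped [Zero R] [LT R] (N : ℤ) (a : ℤ → R) : Prop where
  pos : ∀ α, 0 ≤ α → α ≤ N → 0 < a α
  symm : ∀ α, a (N - α) = a α
  lt_succ : ∀ α, 0 ≤ α → 2 * (α + 1) ≤ N → a α < a (α + 1)

/-- A sequence indexed by `ℤ` is symmetric unimodal with center `N / 2` if it is nonnegative,
symmetric about `N / 2`, and nondecreasing up to the index `⌊N / 2⌋`. Negative indices are included,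
so that the notion is stable under translation. Adding such a sequence preserves
bell-shapedness. -/
structure IsSymmUnimodal [Zero R] [LE R] (N : ℤ) (a : ℤ → R) : Prop where
  nonneg : ∀ α, 0 ≤ a α
  symm : ∀ α, a (N - α) = a α
  le_succ : ∀ α, 2 * (α + 1) ≤ N → a α ≤ a (α + 1)

variable {N : ℤ} {a b : ℤ → R}

theorem IsBellShaped.isSymmUnimodal [Zero R] [Preorder R] (ha : IsBellShaped N a)
    (hneg : ∀ α < 0, a α = 0) : IsSymmUnimodal N a := by
  have hnonneg (α : ℤ) : 0 ≤ a α := by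
    rcases lt_or_ge α 0 with hα | hα
    · exact (hneg α hα).ge
    · rcases le_or_gt α N with hαN | hαN
      · exact (ha.pos α hα hαN).le
      · exact ((ha.symm α).symm.trans (hneg _ (by omega))).ge
  refine ⟨hnonneg, ha.symm, fun α hαN ↦ ?_⟩
  rcases lt_or_ge α 0 with hα | hα
  · exact (hneg α hα).trans_le (hnonneg _)
  · exact (ha.lt_succ α hα hαN).le

theorem IsSymmUnimodal.translate [Zero R] [LE R] (ha : IsSymmUnimodal N a) (k : ℤ) :
    IsSymmUnimodal (N + 2 * k) fun α ↦ a (α - k) where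
  nonneg α := ha.nonneg _
  symm α := by
    rw [← ha.symm (α - k)]
    congr 1
    ring
  le_succ α hα := by
    rw [add_sub_right_comm]
    exact ha.le_succ _ (by omega)

theorem IsSymmUnimodal.const_mul [MulZeroClass R] [Preorder R] [PosMulMono R] {c : R} (hc : 0 ≤ c)
    (ha : IsSymmUnimodal N a) : IsSymmUnimodal N fun α ↦ c * a α where
  nonneg α := mul_nonneg hc (ha.nonneg α)
  symm α := by rw [ha.symm]
  le_succ α hα := mul_le_mul_of_nonneg_left (ha.le_succ α hα) hc

theorem IsBellShaped.const_mul [MulZeroClass R] [Preorder R] [PosMulStrictMono R] {c : R}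
    (hc : 0 < c) (ha : IsBellShaped N a) : IsBellShaped N fun α ↦ c * a α where
  pos α h0 hN := mul_pos hc (ha.pos α h0 hN)
  symm α := by rw [ha.symm]
  lt_succ α h0 hα := mul_lt_mul_of_pos_left (ha.lt_succ α h0 hα) hc

theorem IsBellShaped.add_isSymmUnimodal [AddCommMonoid R] [PartialOrder R]
    [IsOrderedCancelAddMonoid R] (ha : IsBellShaped N a) (hb : IsSymmUnimodal N b) :
    IsBellShaped N fun α ↦ a α + b α where
  pos α h0 hN := add_pos_of_pos_of_nonneg (ha.pos α h0 hN) (hb.nonneg α)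
  symm α := by rw [ha.symm, hb.symm]
  lt_succ α h0 hα := add_lt_add_of_lt_of_le (ha.lt_succ α h0 hα) (hb.le_succ α hα)

end BellShaped

theorem binomZ_of_lt {p : ℕ} {q : ℤ} (hq : p < q) : binomZ p q = 0 := by
  lift q to ℕ using by omega
  rw [binomZ_natCast, Nat.choose_eq_zero_of_lt (by omega), Nat.cast_zero]

theorem binomZ_symm (p : ℕ) (q : ℤ) : binomZ p (p - q) = binomZ p q := by
  rcases lt_or_ge q 0 with hq | hq
  · rw [binomZ_of_neg p hq, binomZ_of_lt (by omega)]
  · lift q to ℕ using hq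
    rcases le_or_gt q p with hqp | hpq
    · rw [← Nat.cast_sub hqp, binomZ_natCast, binomZ_natCast, Nat.choose_symm hqp]
    · rw [binomZ_of_neg p (by omega), binomZ_of_lt (by omega)]

theorem isBellShaped_binomZ (p : ℕ) : IsBellShaped p (binomZ p) where
  pos α h0 hp := by
    lift α to ℕ using h0
    rw [binomZ_natCast]
    exact_mod_cast Nat.choose_pos (by omega)
  symm := binomZ_symm p
  lt_succ α h0 hα := by
    lift α to ℕ using h0
    rw [← Nat.cast_succ, binomZ_natCast, binomZ_natCast]
    exact_mod_cast choose_lt_choose_succ_of_lt_half (by omega)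

theorem isSymmUnimodal_binomZ (p : ℕ) : IsSymmUnimodal p (binomZ p) :=
  (isBellShaped_binomZ p).isSymmUnimodal fun _ ↦ binomZ_of_neg p

theorem maskNS_eq (n : ℕ) {m : ℕ} (hm : m ≠ 0) (μ : ℝ) :
    maskNS n m μ = fun α ↦ (2 : ℝ) ^ (-((n : ℝ) + 1 + (m : ℝ) ^ (-μ))) *
      (binomZ (n + 1) α + 4 * ((2 : ℝ) ^ ((m : ℝ) ^ (-μ)) - 1) * binomZ (n - 1) (α - 1)) := by
  funext α
  rw [maskNS, if_neg hm]
  split_ifs with hα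
  · rfl
  · rcases lt_or_ge α 0 with hα0 | hα0
    · rw [binomZ_of_neg _ hα0, binomZ_of_neg _ (by omega), mul_zero, add_zero, mul_zero]
    · rw [binomZ_of_lt (by omega), binomZ_of_lt (by omega), mul_zero, add_zero, mul_zero]

theorem maskNS_bell_shaped_general {n m : ℕ} (hn : n ≠ 0) (hm : m ≠ 0) (μ : ℝ) :
    IsBellShaped (n + 1) (maskNS n m μ) := by
  have hd : 0 ≤ 4 * ((2 : ℝ) ^ ((m : ℝ) ^ (-μ)) - 1) :=
    mul_nonneg zero_le_four (sub_nonneg.2 (Real.one_le_rpow one_le_two (by positivity)))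
  have hrow : IsBellShaped (n + 1) (binomZ (n + 1)) := mod_cast isBellShaped_binomZ (n + 1)
  have hshifted : IsSymmUnimodal (n + 1) fun α ↦ binomZ (n - 1) (α - 1) := by
    convert (isSymmUnimodal_binomZ (n - 1)).translate 1 using 1
    omega
  rw [maskNS_eq n hm]
  exact (hrow.add_isSymmUnimodal (hshifted.const_mul hd)).const_mul (by positivity)

/-- The mask `a^{(n,m)}` (for `m ≥ 1`) is bell-shaped: positive on `[0, n+1]`,
centrally symmetric, and strictly increasing up to the middle index. -/
theorem maskNS_bell_shaped (n : ℕ) (hn : 2 ≤ n) (μ : ℝ) (hμ : 1 < μ)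
    (m : ℕ) (hm : 1 ≤ m) :
    (∀ α : ℤ, 0 ≤ α → α ≤ (n : ℤ) + 1 → 0 < maskNS n m μ α) ∧
    (∀ α : ℤ, maskNS n m μ α = maskNS n m μ ((n : ℤ) + 1 - α)) ∧
    (∀ α : ℤ, 0 ≤ α → α ≤ (((n + 1) / 2 : ℕ) : ℤ) - 1 →
      maskNS n m μ α < maskNS n m μ (α + 1)) := by
  have h := maskNS_bell_shaped_general (by omega : n ≠ 0) (by omega : m ≠ 0) μ
  exact ⟨h.pos, fun α ↦ (h.symm α).symm, fun α h0 hα ↦ h.lt_succ α h0 (by omega)⟩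
end

section
/- For every integer n ≥ 2 and every real μ > 1, the B-spline mask a^{(n)} is the fundamental mask of the nonstationary mask sequence: for every α ∈ ℤ, the series Σ_{m=1}^{∞} |a^{(n,m)}_α − a^{(n)}_α| converges (is finite). -/
open MeasureTheory Filter Complex

/-- The B-spline mask of degree `n`: `a^{(n)}_α = 2^{-(n+1)} binom(n+1, α)`. -/
noncomputable def bsplineMask (n : ℕ) (α : ℤ) : ℝ :=
  (1 / (2 : ℝ) ^ (n + 1)) * binomZ (n + 1) α

/-!
With `x = m ^ (-μ)`, the mask `a^{(n,m)}` is the convex combination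
`2 ^ (-x) a^{(n)}_α + (1 - 2 ^ (-x)) a^{(n-2)}_{α-1}` of two B-spline masks. Its difference from
`a^{(n)}` is therefore a constant multiple of `1 - 2 ^ (-x) ≤ x log 2`, and `∑ m ^ (-μ)` converges.
-/

lemma binomZ_eq_zero {p : ℕ} {q : ℤ} (hq : ¬(0 ≤ q ∧ q ≤ p)) : binomZ p q = 0 := by
  rw [binomZ, ite_eq_right_iff]
  intro h0
  exact_mod_cast Nat.choose_eq_zero_of_lt (by lia)

lemma bsplineMask_eq_zero {n : ℕ} {α : ℤ} (hα : ¬(0 ≤ α ∧ α ≤ (n : ℤ) + 1)) :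
    bsplineMask n α = 0 := by
  rw [bsplineMask, binomZ_eq_zero (mod_cast hα), mul_zero]

lemma maskNS_add_two_eq_convex_combination (n : ℕ) {m : ℕ} (hm : m ≠ 0) (μ : ℝ) (α : ℤ) :
    maskNS (n + 2) m μ α =
      (2 : ℝ) ^ (-(m : ℝ) ^ (-μ)) * bsplineMask (n + 2) α +
        (1 - (2 : ℝ) ^ (-(m : ℝ) ^ (-μ))) * bsplineMask n (α - 1) := by
  by_cases hα : 0 ≤ α ∧ α ≤ ((n + 2 : ℕ) : ℤ) + 1
  · rw [maskNS, if_neg hm, if_pos hα, bsplineMask, bsplineMask, Nat.add_succ_sub_one]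
    generalize (m : ℝ) ^ (-μ) = x
    have hscale : (2 : ℝ) ^ (-(((n + 2 : ℕ) : ℝ) + 1 + x)) = 1 / 2 ^ (n + 2 + 1) * 2 ^ (-x) := by
      rw [neg_add, Real.rpow_add two_pos, Real.rpow_neg two_pos.le, one_div]
      norm_cast
    have hcancel : (2 : ℝ) ^ (-x) * 2 ^ x = 1 := by
      rw [← Real.rpow_add two_pos, neg_add_cancel, Real.rpow_zero]
    rw [hscale]
    linear_combination (4 / 2 ^ (n + 2 + 1) * binomZ (n + 1) (α - 1)) * hcancel
  · rw [maskNS, if_neg hm, if_neg hα, bsplineMask_eq_zero hα, bsplineMask_eq_zero (by lia),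
      mul_zero, mul_zero, add_zero]

lemma summable_one_sub_rpow_neg {ι : Type*} {b : ℝ} (hb : 1 ≤ b) {x : ι → ℝ}
    (hx : ∀ i, 0 ≤ x i) (hs : Summable x) : Summable fun i => 1 - b ^ (-x i) := by
  have hb0 : 0 < b := one_pos.trans_le hb
  refine .of_nonneg_of_le (fun i => ?_) (fun i => ?_) (hs.mul_right (Real.log b))
  · exact sub_nonneg.2 (Real.rpow_le_one_of_one_le_of_nonpos hb (neg_nonpos.2 (hx i)))
  · rw [Real.rpow_neg hb0.le, ← Real.log_rpow hb0]
    exact Real.one_sub_inv_le_log_of_pos (Real.rpow_pos_of_pos hb0 _)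

/-- The B-spline mask is the fundamental mask of the nonstationary mask sequence:
`Σ_{m≥1} |a^{(n,m)}_α − a^{(n)}_α| < ∞` for every `α`. -/
theorem maskNS_fundamental_mask (n : ℕ) (hn : 2 ≤ n) (μ : ℝ) (hμ : 1 < μ) :
    ∀ α : ℤ, Summable (fun m : ℕ => |maskNS n (m + 1) μ α - bsplineMask n α|) := by
  intro α
  obtain ⟨k, rfl⟩ := Nat.exists_eq_add_of_le' hn
  have hpow : Summable fun m : ℕ => ((m + 1 : ℕ) : ℝ) ^ (-μ) :=
    (summable_nat_add_iff 1).2 (Real.summable_nat_rpow.2 (neg_lt_neg hμ))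
  have hweight : Summable fun m : ℕ => 1 - (2 : ℝ) ^ (-((m + 1 : ℕ) : ℝ) ^ (-μ)) :=
    summable_one_sub_rpow_neg one_le_two (fun m => by positivity) hpow
  have hdiff (m : ℕ) : maskNS (k + 2) (m + 1) μ α - bsplineMask (k + 2) α =
      (1 - (2 : ℝ) ^ (-((m + 1 : ℕ) : ℝ) ^ (-μ))) *
        (bsplineMask k (α - 1) - bsplineMask (k + 2) α) := by
    rw [maskNS_add_two_eq_convex_combination k m.succ_ne_zero]
    ring
  simpa only [hdiff] using (hweight.mul_right _).abs
end

section
/- (Approximation order, Corollary 4.4.) Let n ≥ 2 be an integer and μ > 1 real. For each integer m ≥ 1 let φ_m : ℝ → ℝ be continuous, compactly supported, with Fourier transform equal to Φ^{(n,m)}, and let V^{(n,m)} be the closure in L²(ℝ) of the linear span of { φ_m(· − 2^{-m} α) : α ∈ ℤ }. Then for every f in the Sobolev space H^{n-1}(ℝ) there exists a constant C_f, independent of m, such that for every m ≥ 1, inf_{g ∈ V^{(n,m)}} ‖f − g‖_{L²(ℝ)} ≤ C_f · 2^{-m(n-1)}. -/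
open MeasureTheory Filter Complex

/-- Partial product `∏_{k=m}^{N-1} A^{(n,k)}(e^{-iω/2^{k+1}})` of the infinite product
defining the Fourier transform `Φ^{(n,m)}` of the refinable ripplet `φ^{(n,m)}`. -/
noncomputable def partialProdNS (n m : ℕ) (μ : ℝ) (ω : ℝ) (N : ℕ) : ℂ :=
  ∏ k ∈ Finset.Ico m N, symbolNS n k μ (Complex.exp (-(Complex.I * ω) / 2 ^ (k + 1)))

/-!
Put `h = 2^{-m}` and `p = n - 1`. By Plancherel (for `L¹ ∩ L²`, extended to `f` by truncation and
Fatou), the error `‖f - ∑ c_α φ(· - hα)‖` is at most `‖F - S Φ‖`, where `S` is the trigonometric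
polynomial of period `2π/h` with coefficients `c`. On the cell `|ω| ≤ π/h` choose `S` close in `L²`
to `F/Φ`. The error then has three parts: `F` outside the cell, where `1 ≤ (h|ω|)^p`; a small error
inside it; and the aliases `S(ω) Φ(ω + 2πj/h)`, `j ≠ 0`, which are `O((h|ω|)^p |F(ω)| / |j|)` if `Φ`
is bounded below on the cell and vanishes to order `p` at the points `2πj/h`. Since `1/|j|` is
square summable, all of it is `O(h^p ‖|ω|^p F‖)`.

These Strang–Fix conditions come from a sandwich. At `z = e^{-2iθ}` the symbol has modulus
`|cos θ|^p T` with `cos² θ ≤ T ≤ 1`, so Viète's product `∏ cos(x/2^j) = sin x / x` gives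
`|sinc|^{p+2} ≤ |Φ| ≤ |sinc|^p` at `x = ω/2^{m+1}`, with constants independent of `m` and `μ`.
-/

section Plancherel

open FourierTransform SchwartzMap

variable {V E : Type*} [NormedAddCommGroup V] [InnerProductSpace ℝ V] [FiniteDimensional ℝ V]
  [MeasurableSpace V] [BorelSpace V] [NormedAddCommGroup E] [InnerProductSpace ℂ E]
  {u : V → E}

lemma continuous_fourier (hu : Integrable u) : Continuous (𝓕 u) :=
  VectorFourier.fourierIntegral_continuous Real.continuous_fourierChar
    (by exact continuous_inner) hu

variable [CompleteSpace E]

lemma integral_fourier_smul_eq (hu : Integrable u) {g : V → ℂ} (hg : Integrable g) :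
    ∫ ξ, 𝓕 g ξ • u ξ = ∫ x, g x • 𝓕 u x := by
  have hflip := VectorFourier.integral_fourierIntegral_smul_eq_flip (e := Real.fourierChar)
    (μ := volume) (ν := volume) (L := innerₗ V) Real.continuous_fourierChar
    (by exact continuous_inner) hg hu
  rwa [flip_innerₗ] at hflip

lemma fourier_toLp_ae_eq (hu : Integrable u) (hu2 : MemLp u 2) :
    (𝓕 (hu2.toLp u) : Lp E 2 (volume : Measure V)) =ᵐ[volume] 𝓕 u := by
  set U : Lp E 2 (volume : Measure V) := 𝓕 (hu2.toLp u)
  refine ae_eq_of_integral_contDiff_smul_eq ((Lp.memLp U).locallyIntegrable one_le_two)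
    (continuous_fourier hu).locallyIntegrable fun g hg hgs => ?_
  let G : 𝓢(V, ℂ) := (hgs.comp_left Complex.ofReal_zero).toSchwartzMap
    (Complex.ofRealCLM.contDiff.comp hg)
  have htest := congrArg (fun T => T G) (Lp.fourier_toTemperedDistribution_eq (hu2.toLp u))
  simp only [TemperedDistribution.fourier_apply, Lp.toTemperedDistribution_apply] at htest
  have hrep : ∫ x, (𝓕 G) x • (hu2.toLp u) x = ∫ x, 𝓕 (G : V → ℂ) x • u x := by
    refine integral_congr_ae ?_
    filter_upwards [hu2.coeFn_toLp] with x hx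
    rw [hx, SchwartzMap.fourier_coe]
  rw [hrep, integral_fourier_smul_eq hu G.integrable] at htest
  exact htest.symm

theorem eLpNorm_fourier_eq (hu : Integrable u) (hu2 : MemLp u 2) :
    eLpNorm (𝓕 u) 2 volume = eLpNorm u 2 volume := by
  rw [← eLpNorm_congr_ae (fourier_toLp_ae_eq hu hu2), ← eLpNorm_congr_ae hu2.coeFn_toLp,
    ← ENNReal.toReal_eq_toReal_iff' (Lp.eLpNorm_ne_top _) (Lp.eLpNorm_ne_top _), ← Lp.norm_def,
    ← Lp.norm_def, Lp.norm_fourier_eq]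

end Plancherel

section AngularFourier

/-- The Fourier transform on `ℝ` in angular frequency, `∫ f(x) e^{-iωx} dx`. Mathlib's `𝓕` uses the
kernel `e^{-2πiωx}`; the two differ by a dilation, see `angularFourier_eq_fourier`. -/
noncomputable def angularFourier (f : ℝ → ℂ) (ω : ℝ) : ℂ :=
  ∫ x : ℝ, f x * cexp (-(I * ω * x))

open FourierTransform in
lemma angularFourier_eq_fourier (f : ℝ → ℂ) (ω : ℝ) :
    angularFourier f ω = 𝓕 f ((2 * Real.pi)⁻¹ * ω) := by
  rw [Real.fourier_real_eq_integral_exp_smul, angularFourier]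
  refine integral_congr_ae (ae_of_all _ fun x => ?_)
  have hpi : (Real.pi : ℂ) ≠ 0 := ofReal_ne_zero.mpr Real.pi_ne_zero
  simp only [smul_eq_mul, mul_comm (f x)]
  congr 2
  push_cast
  field_simp

lemma continuous_angularFourier {f : ℝ → ℂ} (hf : Integrable f) :
    Continuous (angularFourier f) := by
  rw [funext (angularFourier_eq_fourier f)]
  exact (continuous_fourier hf).comp (continuous_const_mul _)

lemma eLpNorm_comp_mul_left {E : Type*} [NormedAddCommGroup E] {p : ENNReal} (hp : p ≠ ⊤) {a : ℝ}
    (ha : a ≠ 0) (v : ℝ → E) :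
    eLpNorm (fun x => v (a * x)) p volume =
      ENNReal.ofReal |a⁻¹| ^ (1 / p).toReal • eLpNorm v p volume := by
  rw [← eLpNorm_smul_measure_of_ne_top hp, ← Real.map_volume_mul_left ha]
  exact ((Homeomorph.mulLeft₀ a ha).measurableEmbedding.eLpNorm_map_measure).symm

lemma eLpNorm_angularFourier {u : ℝ → ℂ} (hu : Integrable u) (hu2 : MemLp u 2) :
    eLpNorm (angularFourier u) 2 volume =
      ENNReal.ofReal (2 * Real.pi) ^ (1 / (2 : ENNReal)).toReal • eLpNorm u 2 volume := by
  rw [funext (angularFourier_eq_fourier u),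
    eLpNorm_comp_mul_left ENNReal.ofNat_ne_top (inv_ne_zero Real.two_pi_pos.ne'), inv_inv,
    abs_of_pos Real.two_pi_pos, eLpNorm_fourier_eq hu hu2]

lemma eLpNorm_le_eLpNorm_angularFourier {u : ℝ → ℂ} (hu : Integrable u) (hu2 : MemLp u 2) :
    eLpNorm u 2 volume ≤ eLpNorm (angularFourier u) 2 volume := by
  rw [eLpNorm_angularFourier hu hu2, smul_eq_mul]
  refine le_mul_of_one_le_left' (ENNReal.one_le_rpow (ENNReal.one_le_ofReal.mpr ?_) (by norm_num))
  linarith [Real.pi_gt_three]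

lemma norm_exp_neg_I_mul (ω x : ℝ) : ‖cexp (-(I * ω * x))‖ = 1 := by
  have hcast : -(I * ω * x) = ((-(ω * x) : ℝ) : ℂ) * I := by push_cast; ring
  rw [hcast, Complex.norm_exp_ofReal_mul_I]

lemma integrable_mul_exp_neg_I_mul {f : ℝ → ℂ} (hf : Integrable f) (ω : ℝ) :
    Integrable fun x : ℝ => f x * cexp (-(I * ω * x)) :=
  hf.mul_bdd (by fun_prop) (ae_of_all _ fun x => (norm_exp_neg_I_mul ω x).le)

lemma angularFourier_sub {f g : ℝ → ℂ} (hf : Integrable f) (hg : Integrable g) :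
    angularFourier (f - g) = angularFourier f - angularFourier g := by
  ext ω
  simp only [angularFourier, Pi.sub_apply, sub_mul]
  exact integral_sub (integrable_mul_exp_neg_I_mul hf ω) (integrable_mul_exp_neg_I_mul hg ω)

lemma angularFourier_comp_sub_right (f : ℝ → ℂ) (a ω : ℝ) :
    angularFourier (fun x => f (x - a)) ω = cexp (-(I * ω * a)) * angularFourier f ω := by
  rw [angularFourier, angularFourier, ← integral_const_mul,
    ← integral_sub_right_eq_self (fun x : ℝ => cexp (-(I * ω * a)) * (f x * cexp (-(I * ω * x)))) a]
  refine integral_congr_ae (ae_of_all _ fun x => ?_)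
  have hexp : cexp (-(I * ω * x)) = cexp (-(I * ω * a)) * cexp (-(I * ω * (x - a : ℝ))) := by
    rw [← Complex.exp_add]; push_cast; ring_nf
  simp only [hexp]
  ring

lemma angularFourier_indicator_Ioc (f : ℝ → ℂ) {a b : ℝ} (hab : a ≤ b) (ω : ℝ) :
    angularFourier ((Set.Ioc a b).indicator f) ω = ∫ x in a..b, f x * cexp (-(I * ω * x)) := by
  rw [angularFourier, intervalIntegral.integral_of_le hab, ← integral_indicator measurableSet_Ioc]
  simp only [Set.indicator_mul_left]

end AngularFourier

section FourierPlancherel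

/-- `F` is the Fourier–Plancherel transform of `f` in angular frequency: the `L²`-limit of the
Fourier transforms of the truncations of `f` to `[-R, R]`. -/
def IsFourierPlancherel (f F : ℝ → ℂ) : Prop :=
  Tendsto (fun R : ℝ => eLpNorm
    (fun ω : ℝ => F ω - ∫ x in (-R)..R, f x * cexp (-(I * ω * x))) 2 volume) atTop (nhds 0)

variable {f F q : ℝ → ℂ}

lemma IsFourierPlancherel.tendsto_truncation (h : IsFourierPlancherel f F) :
    Tendsto (fun N : ℕ => eLpNorm (F - angularFourier ((Set.Ioc (-N : ℝ) N).indicator f)) 2 volume)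
      atTop (nhds 0) := by
  refine (h.comp tendsto_natCast_atTop_atTop).congr fun N => ?_
  refine eLpNorm_congr_ae (ae_of_all _ fun ω => ?_)
  rw [Pi.sub_apply, angularFourier_indicator_Ioc f (neg_le_self N.cast_nonneg)]

lemma tendsto_indicator_Ioc_neg_natCast (f : ℝ → ℂ) (x : ℝ) :
    Tendsto (fun N : ℕ => (Set.Ioc (-N : ℝ) N).indicator f x) atTop (nhds (f x)) := by
  refine tendsto_const_nhds.congr' ?_
  filter_upwards [tendsto_natCast_atTop_atTop.eventually_gt_atTop |x|] with N hN
  have hmem : x ∈ Set.Ioc (-N : ℝ) N := ⟨(abs_lt.mp hN).1, (abs_lt.mp hN).2.le⟩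
  exact (Set.indicator_of_mem hmem f).symm

theorem IsFourierPlancherel.eLpNorm_sub_le_sub_angularFourier (h : IsFourierPlancherel f F)
    (hf : MemLp f 2) (hF : AEStronglyMeasurable F) (hq : Integrable q) (hq2 : MemLp q 2) :
    eLpNorm (f - q) 2 volume ≤ eLpNorm (F - angularFourier q) 2 volume := by
  let trunc (N : ℕ) : ℝ → ℂ := (Set.Ioc (-N : ℝ) N).indicator f
  have htrunc2 (N : ℕ) : MemLp (trunc N) 2 := hf.indicator measurableSet_Ioc
  have htrunc (N : ℕ) : Integrable (trunc N) :=
    (integrable_indicator_iff measurableSet_Ioc).mpr ((hf.restrict _).integrable one_le_two)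
  have hbound (N : ℕ) : eLpNorm (trunc N - q) 2 volume ≤
      eLpNorm (F - angularFourier (trunc N)) 2 volume +
        eLpNorm (F - angularFourier q) 2 volume := by
    refine (eLpNorm_le_eLpNorm_angularFourier ((htrunc N).sub hq) ((htrunc2 N).sub hq2)).trans ?_
    rw [angularFourier_sub (htrunc N) hq, ← sub_sub_sub_cancel_left _ _ F, add_comm]
    exact eLpNorm_sub_le (hF.sub (continuous_angularFourier hq).aestronglyMeasurable)
      (hF.sub (continuous_angularFourier (htrunc N)).aestronglyMeasurable) one_le_two
  have hlim := h.tendsto_truncation.add_const (eLpNorm (F - angularFourier q) 2 volume)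
  rw [zero_add] at hlim
  calc eLpNorm (f - q) 2 volume
      ≤ liminf (fun N => eLpNorm (trunc N - q) 2 volume) atTop :=
        Lp.eLpNorm_lim_le_liminf_eLpNorm
          (fun N => ((htrunc2 N).sub hq2).aestronglyMeasurable) _
          (ae_of_all _ fun x => (tendsto_indicator_Ioc_neg_natCast f x).sub_const (q x))
    _ ≤ liminf (fun N : ℕ => eLpNorm (F - angularFourier (trunc N)) 2 volume +
          eLpNorm (F - angularFourier q) 2 volume) atTop :=
        liminf_le_liminf (Eventually.of_forall hbound)
    _ = eLpNorm (F - angularFourier q) 2 volume := hlim.liminf_eq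

end FourierPlancherel

section TrigSum

/-- The trigonometric sum `∑ α ∈ s, c α e^{-ihαω}`: the multiplier by which the combination
`∑ α ∈ s, c α φ(· - hα)` of shifts acts on the Fourier transform of `φ`. -/
noncomputable def trigSum (h : ℝ) (s : Finset ℤ) (c : ℤ → ℂ) (ω : ℝ) : ℂ :=
  ∑ α ∈ s, c α * cexp (-(I * ω * (h * α : ℝ)))

variable {h : ℝ} {s : Finset ℤ} {c : ℤ → ℂ}

lemma continuous_trigSum : Continuous (trigSum h s c) := by
  unfold trigSum
  fun_prop

lemma trigSum_add_int_mul_two_pi_div (hh : h ≠ 0) (ω : ℝ) (j : ℤ) :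
    trigSum h s c (ω + j * (2 * Real.pi / h)) = trigSum h s c ω := by
  refine Finset.sum_congr rfl fun α _ => ?_
  have hh' : (h : ℂ) ≠ 0 := ofReal_ne_zero.mpr hh
  have hshift : -(I * (ω + j * (2 * Real.pi / h) : ℝ) * (h * α : ℝ)) =
      -(I * ω * (h * α : ℝ)) + (-(j * α) : ℤ) * (2 * Real.pi * I) := by
    push_cast
    field_simp
    ring
  rw [hshift, Complex.exp_add, Complex.exp_int_mul_two_pi_mul_I, mul_one]

variable {φ : ℝ → ℂ}

lemma integrable_sum_mul_comp_sub (hφ : Integrable φ) :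
    Integrable fun x => ∑ α ∈ s, c α * φ (x - h * α) :=
  integrable_finsetSum _ fun _ _ => (hφ.comp_sub_right _).const_mul _

lemma memLp_sum_mul_comp_sub {p : ENNReal} (hφ : MemLp φ p) :
    MemLp (fun x => ∑ α ∈ s, c α * φ (x - h * α)) p :=
  memLp_finsetSum _ fun α _ =>
    (hφ.comp_measurePreserving (measurePreserving_sub_right volume (h * α))).const_mul (c α)

lemma angularFourier_sum_mul_comp_sub (hφ : Integrable φ) (ω : ℝ) :
    angularFourier (fun x => ∑ α ∈ s, c α * φ (x - h * α)) ω =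
      trigSum h s c ω * angularFourier φ ω := by
  have hterm (α : ℤ) : ∫ x : ℝ, c α * φ (x - h * α) * cexp (-(I * ω * x)) =
      c α * cexp (-(I * ω * (h * α : ℝ))) * angularFourier φ ω := by
    simp only [mul_assoc (c α), integral_const_mul, ← angularFourier_comp_sub_right]
    rfl
  simp only [trigSum, Finset.sum_mul, ← hterm]
  rw [angularFourier]
  simp only [Finset.sum_mul]
  exact integral_finsetSum _ fun α _ =>
    integrable_mul_exp_neg_I_mul ((hφ.comp_sub_right (h * α)).const_mul (c α)) ω

end TrigSum

section TrigDensity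

lemma exists_eLpNorm_sub_sum_fourier_le {T : ℝ} [Fact (0 < T)] {g : AddCircle T → ℂ}
    (hg : MemLp g 2 AddCircle.haarAddCircle) {δ : ENNReal} (hδ : δ ≠ 0) :
    ∃ (s : Finset ℤ) (c : ℤ → ℂ),
      eLpNorm (g - ∑ α ∈ s, c α • ⇑(fourier α)) 2 AddCircle.haarAddCircle ≤ δ := by
  obtain ⟨s, hs⟩ := (EMetric.tendsto_nhds.mp (hasSum_fourier_series_L2 (hg.toLp g)) δ
    hδ.bot_lt).exists
  refine ⟨s, fourierCoeff (hg.toLp g), ?_⟩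
  have hcoe : (∑ α ∈ s, fourierCoeff (hg.toLp g) α • fourierLp 2 α :
      Lp ℂ 2 (AddCircle.haarAddCircle (T := T))) =ᵐ[AddCircle.haarAddCircle]
      ∑ α ∈ s, fourierCoeff (hg.toLp g) α • ⇑(fourier α) := by
    simp only [← map_smul, ← map_sum]
    refine (ContinuousMap.coeFn_toLp _ _).trans (Eventually.of_forall fun x => ?_)
    simp
  rw [edist_comm, Lp.edist_def, eLpNorm_congr_ae (hg.coeFn_toLp.sub hcoe)] at hs
  exact hs.le

lemma eLpNorm_comp_coe_addCircle {E : Type*} [NormedAddCommGroup E] {p : ENNReal} (hp : p ≠ ⊤)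
    {T : ℝ} [Fact (0 < T)] (t : ℝ) {g : AddCircle T → E}
    (hg : AEStronglyMeasurable g) :
    eLpNorm (fun ω : ℝ => g ω) p (volume.restrict (Set.Ioc t (t + T))) =
      ENNReal.ofReal T ^ (1 / p).toReal * eLpNorm g p AddCircle.haarAddCircle := by
  rw [← smul_eq_mul, ← eLpNorm_smul_measure_of_ne_top hp, ← AddCircle.volume_eq_smul_haarAddCircle]
  exact eLpNorm_comp_measurePreserving hg (AddCircle.measurePreserving_mk T t)

lemma sum_fourier_coe_eq_trigSum {h : ℝ} (hh : h ≠ 0) (s : Finset ℤ) (c : ℤ → ℂ) (ω : ℝ) :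
    ∑ α ∈ s, c α * fourier α (ω : AddCircle (2 * Real.pi / h)) =
      trigSum h (s.map (Equiv.neg ℤ).toEmbedding) (fun α => c (-α)) ω := by
  rw [trigSum, Finset.sum_map]
  refine Finset.sum_congr rfl fun α _ => ?_
  have hh' : (h : ℂ) ≠ 0 := ofReal_ne_zero.mpr hh
  have hpi : (Real.pi : ℂ) ≠ 0 := ofReal_ne_zero.mpr Real.pi_ne_zero
  simp only [fourier_coe_apply, Equiv.coe_toEmbedding, Equiv.neg_apply, neg_neg]
  congr 2
  push_cast
  field_simp

theorem exists_eLpNorm_sub_trigSum_le {h : ℝ} (hh : 0 < h) (t : ℝ) {τ : ℝ → ℂ}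
    (hτ : MemLp τ 2 (volume.restrict (Set.Ioc t (t + 2 * Real.pi / h)))) {δ : ENNReal}
    (hδ : δ ≠ 0) :
    ∃ (s : Finset ℤ) (c : ℤ → ℂ),
      eLpNorm (τ - trigSum h s c) 2 (volume.restrict (Set.Ioc t (t + 2 * Real.pi / h))) ≤ δ := by
  set T := 2 * Real.pi / h
  have : Fact (0 < T) := ⟨div_pos Real.two_pi_pos hh⟩
  set K : ENNReal := ENNReal.ofReal T ^ (1 / (2 : ENNReal)).toReal
  have hK : K ≠ ⊤ := by finiteness
  have hlift := hτ.memLp_liftIoc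
  obtain ⟨s, c, hsc⟩ := exists_eLpNorm_sub_sum_fourier_le hlift.haarAddCircle
    (ENNReal.div_ne_zero.mpr ⟨hδ, hK⟩)
  set S : AddCircle T → ℂ := ∑ α ∈ s, c α • ⇑(fourier α) with hSdef
  have hS : Continuous S := by
    simp only [hSdef, Finset.sum_fn]
    fun_prop
  refine ⟨s.map (Equiv.neg ℤ).toEmbedding, fun α => c (-α), ?_⟩
  calc _ = eLpNorm (fun ω : ℝ => (AddCircle.liftIoc T t τ - S) ω) 2
          (volume.restrict (Set.Ioc t (t + T))) := by
        refine eLpNorm_congr_ae ?_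
        filter_upwards [ae_restrict_mem measurableSet_Ioc] with ω hω
        simp only [Pi.sub_apply, AddCircle.liftIoc_coe_apply hω, hSdef, Finset.sum_apply,
          Pi.smul_apply, smul_eq_mul, sum_fourier_coe_eq_trigSum hh.ne']
    _ ≤ K * (δ / K) := by
        rw [eLpNorm_comp_coe_addCircle ENNReal.ofNat_ne_top t
          (hlift.aestronglyMeasurable.sub hS.aestronglyMeasurable)]
        gcongr
    _ ≤ δ := ENNReal.mul_div_le

end TrigDensity

section Periodization

lemma lintegral_eq_tsum_lintegral_Ioc {T : ℝ} (hT : 0 < T) (t : ℝ) (g : ℝ → ENNReal) :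
    ∫⁻ x, g x = ∑' j : ℤ, ∫⁻ x in Set.Ioc t (t + T), g (x + j * T) := by
  let e : ℤ ≃ AddSubgroup.zmultiples T :=
    Equiv.ofInjective (fun j : ℤ => j • T) (zsmul_left_strictMono hT).injective
  rw [(isAddFundamentalDomain_Ioc hT t volume).lintegral_eq_tsum'' g, ← e.tsum_eq]
  refine tsum_congr fun j => lintegral_congr fun x => congrArg g ?_
  change j • T + x = x + j * T
  rw [zsmul_eq_mul, add_comm]

theorem eLpNorm_le_of_forall_translate_le {E E' : Type*} [NormedAddCommGroup E]
    [NormedAddCommGroup E'] {p : ENNReal} (hp0 : p ≠ 0) (hp : p ≠ ⊤) {T : ℝ} (hT : 0 < T) {t : ℝ}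
    {β : ℤ → ℝ} {G : ℝ → E} {H : ℝ → E'}
    (hGH : ∀ x ∈ Set.Ioc t (t + T), ∀ j : ℤ, ‖G (x + j * T)‖ ≤ β j * ‖H x‖) :
    eLpNorm G p volume ≤
      eLpNorm β p Measure.count * eLpNorm H p (volume.restrict (Set.Ioc t (t + T))) := by
  simp only [eLpNorm_eq_lintegral_rpow_enorm_toReal hp0 hp]
  rw [← ENNReal.mul_rpow_of_nonneg _ _ (by positivity), lintegral_eq_tsum_lintegral_Ioc hT t,
    lintegral_count, ← ENNReal.tsum_mul_right]
  gcongr with j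
  rw [← lintegral_const_mul' _ _ (by finiteness)]
  refine lintegral_mono_ae ?_
  filter_upwards [ae_restrict_mem measurableSet_Ioc] with x hx
  rw [← ENNReal.mul_rpow_of_nonneg _ _ ENNReal.toReal_nonneg]
  gcongr
  calc ‖G (x + j * T)‖ₑ ≤ ‖β j * ‖H x‖‖ₑ :=
        enorm_le_iff_norm_le.mpr ((hGH x hx j).trans (Real.le_norm_self _))
    _ = ‖β j‖ₑ * ‖H x‖ₑ := by rw [enorm_mul, enorm_norm]

end Periodization

section StrangFix

/-- The fundamental cell `(-π/h, π/h]` of the frequencies dual to the grid `hℤ`, with its right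
end written as left end plus period. -/
def dualCell (h : ℝ) : Set ℝ :=
  Set.Ioc (-(Real.pi / h)) (-(Real.pi / h) + 2 * Real.pi / h)

/-- Quantitative Strang–Fix conditions of order `p` at step `h`: on the cell `|x| ≤ π / h` the
transform `Φ` of the generator is at least `κ`, and its translate by the nonzero dual lattice
point `2πj/h` vanishes to order `p` at the origin, with decay `β j`. -/
structure StrangFixBounds (h κ : ℝ) (p : ℕ) (β : ℤ → ℝ) (Φ : ℝ → ℂ) : Prop where
  nonneg : ∀ j, 0 ≤ β j
  le_norm : ∀ x, |x| ≤ Real.pi / h → κ ≤ ‖Φ x‖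
  norm_le : ∀ x, |x| ≤ Real.pi / h → ‖Φ x‖ ≤ β 0
  norm_translate_le : ∀ x, |x| ≤ Real.pi / h → ∀ j : ℤ, j ≠ 0 →
    ‖Φ (x + j * (2 * Real.pi / h))‖ ≤ β j * (h * |x|) ^ p

variable {h κ : ℝ} {p : ℕ} {β : ℤ → ℝ} {F Φ : ℝ → ℂ}

lemma measurableSet_dualCell : MeasurableSet (dualCell h) := measurableSet_Ioc

lemma abs_le_of_mem_dualCell {x : ℝ} (hx : x ∈ dualCell h) : |x| ≤ Real.pi / h := by
  rw [abs_le]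
  exact ⟨hx.1.le, hx.2.trans_eq (by ring)⟩

lemma le_abs_of_notMem_dualCell {x : ℝ} (hx : x ∉ dualCell h) : Real.pi / h ≤ |x| := by
  contrapose! hx
  rw [abs_lt] at hx
  exact ⟨hx.1, hx.2.le.trans_eq (by ring)⟩

lemma add_int_mul_notMem_dualCell (hh : 0 < h) {x : ℝ} (hx : x ∈ dualCell h) {j : ℤ}
    (hj : j ≠ 0) : x + j * (2 * Real.pi / h) ∉ dualCell h := by
  intro hxj
  have hT : 0 < 2 * Real.pi / h := div_pos Real.two_pi_pos hh
  have hlt : |(j : ℝ) * (2 * Real.pi / h)| < 2 * Real.pi / h := by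
    rw [abs_lt]
    constructor <;> linarith [hx.1, hx.2, hxj.1, hxj.2]
  have hj1 : (1 : ℝ) ≤ |(j : ℝ)| := by exact_mod_cast Int.one_le_abs hj
  rw [abs_mul, abs_of_pos hT] at hlt
  nlinarith

lemma eLpNorm_indicator_compl_dualCell_le (hh : 0 < h) :
    eLpNorm ((dualCell h)ᶜ.indicator F) 2 volume ≤
      ENNReal.ofReal (h ^ p) * eLpNorm (fun ω => |ω| ^ p • F ω) 2 volume := by
  refine eLpNorm_le_mul_eLpNorm_of_ae_le_mul (ae_of_all _ fun x => ?_) 2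
  by_cases hx : x ∈ dualCell h
  · rw [Set.indicator_of_notMem (Set.notMem_compl_iff.mpr hx), norm_zero]
    positivity
  · have hpi : 1 ≤ h * |x| := by
      have := (div_le_iff₀' hh).mp (le_abs_of_notMem_dualCell hx)
      linarith [Real.pi_gt_three]
    rw [Set.indicator_of_mem hx, norm_smul, norm_pow, Real.norm_eq_abs, abs_abs, ← mul_assoc,
      ← mul_pow]
    exact le_mul_of_one_le_left (norm_nonneg _) (one_le_pow₀ hpi)

lemma StrangFixBounds.memLp_div (hΦ : StrangFixBounds h κ p β Φ) (hκ : 0 < κ)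
    (hΦm : AEStronglyMeasurable Φ) (hF : MemLp F 2) :
    MemLp (fun x => F x / Φ x) 2 (volume.restrict (dualCell h)) := by
  refine (hF.restrict _).of_le_mul (c := κ⁻¹) ?_ ?_
  · exact (hF.aestronglyMeasurable.aemeasurable.div hΦm.aemeasurable).aestronglyMeasurable.restrict
  · filter_upwards [ae_restrict_mem measurableSet_dualCell] with x hx
    rw [norm_div, div_eq_inv_mul]
    gcongr
    exact hΦ.le_norm x (abs_le_of_mem_dualCell hx)

/-- The function on the dual cell controlling the error of approximating `F` by `S * Φ` there and,
through aliasing, on all its translates. -/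
noncomputable def aliasingMajorant (h κ : ℝ) (p : ℕ) (F Φ S : ℝ → ℂ) (x : ℝ) : ℝ :=
  κ⁻¹ * (h * |x|) ^ p * ‖F x‖ + Real.pi ^ p * ‖F x / Φ x - S x‖

lemma StrangFixBounds.norm_sub_mul_le (hΦ : StrangFixBounds h κ p β Φ) (hh : 0 < h)
    (hκ : 0 < κ) (S : ℝ → ℂ) {x : ℝ} (hx : |x| ≤ Real.pi / h) :
    ‖F x - S x * Φ x‖ ≤ β 0 * aliasingMajorant h κ p F Φ S x := by
  have hΦx : Φ x ≠ 0 := norm_pos_iff.mp (hκ.trans_le (hΦ.le_norm x hx))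
  have hfactor : F x - S x * Φ x = Φ x * (F x / Φ x - S x) := by
    rw [mul_sub, mul_div_cancel₀ _ hΦx, mul_comm (S x)]
  have hpi : 1 ≤ Real.pi ^ p := one_le_pow₀ (by linarith [Real.pi_gt_three])
  have hle : ‖F x / Φ x - S x‖ ≤ aliasingMajorant h κ p F Φ S x :=
    le_add_of_nonneg_of_le (by positivity) (le_mul_of_one_le_left (norm_nonneg _) hpi)
  rw [hfactor, norm_mul]
  exact mul_le_mul (hΦ.norm_le x hx) hle (norm_nonneg _) (hΦ.nonneg 0)

lemma StrangFixBounds.norm_mul_translate_le (hΦ : StrangFixBounds h κ p β Φ) (hh : 0 < h)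
    (hκ : 0 < κ) (F S : ℝ → ℂ) {x : ℝ} (hx : |x| ≤ Real.pi / h) {j : ℤ} (hj : j ≠ 0) :
    ‖S x * Φ (x + j * (2 * Real.pi / h))‖ ≤ β j * aliasingMajorant h κ p F Φ S x := by
  have hxpi : h * |x| ≤ Real.pi := (le_div_iff₀' hh).mp hx
  have hquot : ‖F x / Φ x‖ ≤ κ⁻¹ * ‖F x‖ := by
    rw [norm_div, div_eq_inv_mul]
    gcongr
    exact hΦ.le_norm x hx
  have hS : (h * |x|) ^ p * ‖S x‖ ≤ aliasingMajorant h κ p F Φ S x := by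
    calc (h * |x|) ^ p * ‖S x‖
        ≤ (h * |x|) ^ p * (‖F x / Φ x‖ + ‖F x / Φ x - S x‖) := by
          gcongr
          exact norm_le_insert _ _
      _ ≤ (h * |x|) ^ p * (κ⁻¹ * ‖F x‖) + Real.pi ^ p * ‖F x / Φ x - S x‖ := by
          rw [mul_add]
          gcongr
      _ = aliasingMajorant h κ p F Φ S x := by rw [aliasingMajorant]; ring
  calc ‖S x * Φ (x + j * (2 * Real.pi / h))‖
      ≤ ‖S x‖ * (β j * (h * |x|) ^ p) := by
        rw [norm_mul]
        gcongr
        exact hΦ.norm_translate_le x hx j hj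
    _ = β j * ((h * |x|) ^ p * ‖S x‖) := by ring
    _ ≤ β j * aliasingMajorant h κ p F Φ S x := mul_le_mul_of_nonneg_left hS (hΦ.nonneg j)

lemma StrangFixBounds.eLpNorm_indicator_sub_le (hΦ : StrangFixBounds h κ p β Φ) (hh : 0 < h)
    (hκ : 0 < κ) (s : Finset ℤ) (c : ℤ → ℂ) :
    eLpNorm ((dualCell h).indicator F - trigSum h s c * Φ) 2 volume ≤
      eLpNorm β 2 Measure.count * eLpNorm (aliasingMajorant h κ p F Φ (trigSum h s c)) 2
        (volume.restrict (dualCell h)) := by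
  refine eLpNorm_le_of_forall_translate_le two_ne_zero ENNReal.ofNat_ne_top
    (div_pos Real.two_pi_pos hh) fun x hx j => ?_
  have hxh := abs_le_of_mem_dualCell hx
  refine le_trans ?_ (mul_le_mul_of_nonneg_left (Real.le_norm_self _) (hΦ.nonneg j))
  simp only [Pi.sub_apply, Pi.mul_apply, trigSum_add_int_mul_two_pi_div hh.ne']
  rcases eq_or_ne j 0 with rfl | hj
  · simp only [Int.cast_zero, zero_mul, add_zero]
    rw [Set.indicator_of_mem (show x ∈ dualCell h from hx)]
    exact hΦ.norm_sub_mul_le hh hκ _ hxh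
  · rw [Set.indicator_of_notMem (add_int_mul_notMem_dualCell hh hx hj), zero_sub, norm_neg]
    exact hΦ.norm_mul_translate_le hh hκ F _ hxh hj

lemma eLpNorm_aliasingMajorant_le (hh : 0 < h) (hκ : 0 < κ) {S : ℝ → ℂ} {ν : Measure ℝ}
    (hF : AEStronglyMeasurable F ν) (hS : AEStronglyMeasurable (fun x => F x / Φ x - S x) ν) :
    eLpNorm (aliasingMajorant h κ p F Φ S) 2 ν ≤
      ENNReal.ofReal (κ⁻¹ * h ^ p) * eLpNorm (fun ω => |ω| ^ p • F ω) 2 ν +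
        ENNReal.ofReal (Real.pi ^ p) * eLpNorm (fun x => F x / Φ x - S x) 2 ν := by
  refine (eLpNorm_add_le ?_ ?_ one_le_two).trans (add_le_add ?_ ?_)
  · exact (by fun_prop : Continuous fun x : ℝ => κ⁻¹ * (h * |x|) ^ p).aestronglyMeasurable.mul
      hF.norm
  · exact hS.norm.const_mul _
  · refine eLpNorm_le_mul_eLpNorm_of_ae_le_mul (ae_of_all _ fun x => le_of_eq ?_) 2
    rw [norm_mul, norm_norm, norm_smul, mul_pow, Real.norm_of_nonneg (by positivity),
      Real.norm_of_nonneg (by positivity)]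
    ring
  · refine eLpNorm_le_mul_eLpNorm_of_ae_le_mul (ae_of_all _ fun x => le_of_eq ?_) 2
    rw [norm_mul, norm_norm, Real.norm_of_nonneg (by positivity)]

theorem StrangFixBounds.exists_eLpNorm_sub_trigSum_mul_le (hΦ : StrangFixBounds h κ p β Φ)
    (hh : 0 < h) (hκ : 0 < κ) (hβ : MemLp β 2 Measure.count) (hΦm : AEStronglyMeasurable Φ)
    (hF : MemLp F 2) {δ : ENNReal} (hδ : δ ≠ 0) :
    ∃ (s : Finset ℤ) (c : ℤ → ℂ), eLpNorm (F - trigSum h s c * Φ) 2 volume ≤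
      (1 + eLpNorm β 2 Measure.count * ENNReal.ofReal κ⁻¹) * ENNReal.ofReal (h ^ p) *
        eLpNorm (fun ω => |ω| ^ p • F ω) 2 volume + δ := by
  set K := eLpNorm β 2 Measure.count
  set W := eLpNorm (fun ω => |ω| ^ p • F ω) 2 volume
  set A := K * ENNReal.ofReal (Real.pi ^ p)
  have hA : A ≠ ⊤ := ENNReal.mul_ne_top hβ.eLpNorm_ne_top ENNReal.ofReal_ne_top
  have hτ := hΦ.memLp_div hκ hΦm hF
  obtain ⟨s, c, hsc⟩ := exists_eLpNorm_sub_trigSum_le hh (-(Real.pi / h)) hτ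
    (ENNReal.div_ne_zero.mpr ⟨hδ, hA⟩)
  refine ⟨s, c, ?_⟩
  have hsplit : F - trigSum h s c * Φ =
      (dualCell h)ᶜ.indicator F + ((dualCell h).indicator F - trigSum h s c * Φ) := by
    rw [← add_sub_assoc, Set.indicator_compl_add_self]
  have hmajor : eLpNorm (aliasingMajorant h κ p F Φ (trigSum h s c)) 2
      (volume.restrict (dualCell h)) ≤
        ENNReal.ofReal (κ⁻¹ * h ^ p) * W + ENNReal.ofReal (Real.pi ^ p) * (δ / A) :=
    (eLpNorm_aliasingMajorant_le hh hκ hF.aestronglyMeasurable.restrict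
      (hτ.aestronglyMeasurable.sub continuous_trigSum.aestronglyMeasurable)).trans
      (by gcongr; exacts [eLpNorm_mono_measure _ Measure.restrict_le_self, hsc])
  calc eLpNorm (F - trigSum h s c * Φ) 2 volume
      ≤ eLpNorm ((dualCell h)ᶜ.indicator F) 2 volume +
          eLpNorm ((dualCell h).indicator F - trigSum h s c * Φ) 2 volume := by
        rw [hsplit]
        exact eLpNorm_add_le (hF.aestronglyMeasurable.indicator measurableSet_dualCell.compl)
          ((hF.aestronglyMeasurable.indicator measurableSet_dualCell).sub
            (continuous_trigSum.aestronglyMeasurable.mul hΦm)) one_le_two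
    _ ≤ ENNReal.ofReal (h ^ p) * W +
          K * (ENNReal.ofReal (κ⁻¹ * h ^ p) * W + ENNReal.ofReal (Real.pi ^ p) * (δ / A)) :=
        add_le_add (eLpNorm_indicator_compl_dualCell_le hh)
          ((hΦ.eLpNorm_indicator_sub_le hh hκ s c).trans (by gcongr))
    _ = (1 + K * ENNReal.ofReal κ⁻¹) * ENNReal.ofReal (h ^ p) * W + A * (δ / A) := by
        rw [ENNReal.ofReal_mul (inv_nonneg.mpr hκ.le)]
        ring
    _ ≤ (1 + K * ENNReal.ofReal κ⁻¹) * ENNReal.ofReal (h ^ p) * W + δ := by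
        gcongr
        exact ENNReal.mul_div_le

theorem StrangFixBounds.exists_eLpNorm_sub_sum_shift_le {f φ : ℝ → ℂ}
    (hφ : StrangFixBounds h κ p β (angularFourier φ)) (hh : 0 < h) (hκ : 0 < κ)
    (hβ : MemLp β 2 Measure.count) (hφ1 : Integrable φ) (hφ2 : MemLp φ 2) (hf : MemLp f 2)
    (hfF : IsFourierPlancherel f F) (hF : MemLp F 2) {δ : ENNReal} (hδ : δ ≠ 0) :
    ∃ (s : Finset ℤ) (c : ℤ → ℂ),
      eLpNorm (fun x => f x - ∑ α ∈ s, c α * φ (x - h * α)) 2 volume ≤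
        (1 + eLpNorm β 2 Measure.count * ENNReal.ofReal κ⁻¹) * ENNReal.ofReal (h ^ p) *
          eLpNorm (fun ω => |ω| ^ p • F ω) 2 volume + δ := by
  obtain ⟨s, c, hsc⟩ := hφ.exists_eLpNorm_sub_trigSum_mul_le hh hκ hβ
    (continuous_angularFourier hφ1).aestronglyMeasurable hF hδ
  refine ⟨s, c, (hfF.eLpNorm_sub_le_sub_angularFourier hf hF.aestronglyMeasurable
    (integrable_sum_mul_comp_sub hφ1) (memLp_sum_mul_comp_sub hφ2)).trans ?_⟩
  rwa [funext (angularFourier_sum_mul_comp_sub hφ1)]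

end StrangFix

section Sinc

lemma sinc_two_mul (x : ℝ) : Real.sinc (2 * x) = Real.sinc x * Real.cos x := by
  rcases eq_or_ne x 0 with rfl | hx
  · simp
  · rw [Real.sinc_of_ne_zero hx, Real.sinc_of_ne_zero (by simpa), Real.sin_two_mul]
    field_simp

lemma sinc_eq_sinc_mul_prod_cos (x : ℝ) (M : ℕ) :
    Real.sinc x = Real.sinc (x / 2 ^ M) * ∏ j ∈ Finset.range M, Real.cos (x / 2 ^ (j + 1)) := by
  induction M with
  | zero => simp
  | succ M ih =>
    have hdouble : x / 2 ^ M = 2 * (x / 2 ^ (M + 1)) := by field_simp; ring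
    rw [ih, Finset.prod_range_succ, hdouble, sinc_two_mul]
    ring

lemma tendsto_prod_cos_div_two_pow (x : ℝ) :
    Tendsto (fun M : ℕ => ∏ j ∈ Finset.range M, Real.cos (x / 2 ^ (j + 1))) atTop
      (nhds (Real.sinc x)) := by
  have hdiv : Tendsto (fun M : ℕ => x / 2 ^ M) atTop (nhds 0) :=
    tendsto_const_nhds.div_atTop (tendsto_pow_atTop_atTop_of_one_lt one_lt_two)
  have hsinc : Tendsto (fun M : ℕ => Real.sinc (x / 2 ^ M)) atTop (nhds 1) :=
    Real.sinc_zero ▸ (Real.continuous_sinc.tendsto 0).comp hdiv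
  have hquot := (tendsto_const_nhds (x := Real.sinc x)).div hsinc one_ne_zero
  rw [div_one] at hquot
  refine hquot.congr' ?_
  filter_upwards [hsinc.eventually_ne one_ne_zero] with M hM
  rw [sinc_eq_sinc_mul_prod_cos x M]
  simp only [Pi.div_apply]
  field_simp

lemma two_div_pi_le_sinc {x : ℝ} (hx : |x| ≤ Real.pi / 2) : 2 / Real.pi ≤ Real.sinc x := by
  rcases eq_or_ne x 0 with rfl | hx0
  · rw [Real.sinc_zero, div_le_one Real.pi_pos]
    exact Real.two_le_pi
  · have habs : Real.sinc x = Real.sinc |x| := by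
      rcases abs_choice x with h | h <;> simp [h]
    rw [habs, Real.sinc_of_ne_zero (abs_ne_zero.mpr hx0), le_div_iff₀ (abs_pos.mpr hx0)]
    exact Real.mul_le_sin (abs_nonneg x) hx

lemma abs_sinc_add_int_mul_pi_le {x : ℝ} (hx : |x| ≤ Real.pi / 2) {j : ℤ} (hj : j ≠ 0) :
    |Real.sinc (x + j * Real.pi)| ≤ |x| / |(j : ℝ)| := by
  have hj1 : (1 : ℝ) ≤ |(j : ℝ)| := by exact_mod_cast Int.one_le_abs hj
  have hfar : |(j : ℝ)| ≤ |x + j * Real.pi| := by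
    have htri := abs_sub_abs_le_abs_sub (j * Real.pi) (-x)
    rw [abs_mul, abs_of_pos Real.pi_pos, abs_neg, sub_neg_eq_add, add_comm _ x] at htri
    nlinarith [Real.two_le_pi, Real.pi_gt_three]
  have hne : x + j * Real.pi ≠ 0 := abs_pos.mp (by linarith)
  rw [Real.sinc_of_ne_zero hne, abs_div, Real.sin_add_int_mul_pi, abs_mul, abs_zpow, abs_neg,
    abs_one, one_zpow, one_mul]
  exact div_le_div₀ (abs_nonneg x) Real.abs_sin_le_abs (by linarith) hfar

end Sinc

section Symbol

/-- The factor that tension contributes to the symbol at level `k`: with `z = e^{-2iθ}`, the symbol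
`A^{(n,k)}(z)` equals `cos θ ^ (n - 1) * tensionFactor k μ θ` up to a unimodular factor. -/
noncomputable def tensionFactor (k : ℕ) (μ θ : ℝ) : ℝ :=
  1 - (2 : ℝ) ^ (-((k : ℝ) ^ (-μ))) * Real.sin θ ^ 2

lemma tensionFactor_le_one (k : ℕ) (μ θ : ℝ) : tensionFactor k μ θ ≤ 1 :=
  sub_le_self _ (by positivity)

lemma cos_sq_le_tensionFactor (k : ℕ) (μ θ : ℝ) : Real.cos θ ^ 2 ≤ tensionFactor k μ θ := by
  have hpow : (2 : ℝ) ^ (-((k : ℝ) ^ (-μ))) ≤ 1 :=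
    Real.rpow_le_one_of_one_le_of_nonpos one_le_two (neg_nonpos.mpr (by positivity))
  rw [Real.cos_sq']
  exact sub_le_sub_left (mul_le_of_le_one_left (sq_nonneg _) hpow) 1

lemma sum_binomZ_mul_pow (p : ℕ) (z : ℂ) :
    ∑ i ∈ Finset.range (p + 1), (binomZ p (i : ℤ) : ℂ) * z ^ i = (1 + z) ^ p := by
  rw [add_comm 1 z, add_pow]
  refine Finset.sum_congr rfl fun i _ => ?_
  simp [binomZ, mul_comm]

lemma sum_binomZ_sub_one_mul_pow (p : ℕ) (z : ℂ) :
    ∑ i ∈ Finset.range (p + 3), (binomZ p ((i : ℤ) - 1) : ℂ) * z ^ i = z * (1 + z) ^ p := by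
  have hbot : binomZ p (((0 : ℕ) : ℤ) - 1) = 0 := by simp [binomZ]
  have htop : binomZ p (((p + 1 : ℕ) : ℤ)) = 0 := by
    rw [binomZ, if_pos (Int.natCast_nonneg _), Int.toNat_natCast, Nat.choose_succ_self,
      Nat.cast_zero]
  rw [Finset.sum_range_succ', hbot, ← sum_binomZ_mul_pow, Finset.mul_sum]
  simp only [Nat.cast_succ, add_sub_cancel_right]
  rw [Finset.sum_range_succ, htop]
  simp only [ofReal_zero, zero_mul, add_zero]
  exact Finset.sum_congr rfl fun i _ => by ring

lemma symbolNS_succ_eq (p : ℕ) {k : ℕ} (hk : k ≠ 0) (μ : ℝ) (z : ℂ) :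
    symbolNS (p + 1) k μ z =
      ((2 : ℝ) ^ (-(((p + 1 : ℕ) : ℝ) + 1 + (k : ℝ) ^ (-μ))) : ℝ) * ((1 + z) ^ (p + 2) +
        4 * ((2 : ℝ) ^ ((k : ℝ) ^ (-μ)) - 1 : ℝ) * (z * (1 + z) ^ p)) := by
  rw [← sum_binomZ_sub_one_mul_pow, ← sum_binomZ_mul_pow (p + 2), symbolNS, Finset.mul_sum,
    ← Finset.sum_add_distrib, Finset.mul_sum]
  refine Finset.sum_congr rfl fun i hi => ?_
  have hi' : i < p + 3 := Finset.mem_range.mp hi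
  rw [maskNS, if_neg hk, if_pos ⟨by positivity, by push_cast; omega⟩, Nat.add_sub_cancel]
  push_cast
  ring

lemma one_add_exp_neg_two_mul_I (θ : ℝ) :
    1 + cexp (-(2 * θ * I)) = cexp (-(θ * I)) * (2 * Real.cos θ : ℝ) := by
  have hsq : cexp (-(2 * θ * I)) = cexp (-(θ * I)) * cexp (-(θ * I)) := by
    rw [← Complex.exp_add]; ring_nf
  have hinv : cexp (-(θ * I)) * cexp (θ * I) = 1 := by rw [← Complex.exp_add]; simp
  push_cast
  rw [Complex.two_cos, neg_mul, hsq, mul_add, hinv]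

lemma symbolNS_exp_eq (p : ℕ) {k : ℕ} (hk : k ≠ 0) (μ θ : ℝ) :
    symbolNS (p + 1) k μ (cexp (-(2 * θ * I))) =
      cexp (-(θ * I)) ^ (p + 2) * (Real.cos θ ^ p * tensionFactor k μ θ : ℝ) := by
  have hsq : cexp (-(2 * θ * I)) = cexp (-(θ * I)) ^ 2 := by
    rw [← Complex.exp_nat_mul]; push_cast; ring_nf
  have hpow (e : ℝ) : (2 : ℝ) ^ (-(((p + 1 : ℕ) : ℝ) + 1 + e)) = (2 ^ (p + 2))⁻¹ * 2 ^ (-e) := by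
    rw [← Real.rpow_natCast, ← Real.rpow_neg two_pos.le, ← Real.rpow_add two_pos]
    congr 1; push_cast; ring
  have hcancel (e : ℝ) : (2 : ℝ) ^ (-e) * 2 ^ e = 1 := by rw [← Real.rpow_add two_pos]; simp
  have hreal : (2 : ℝ) ^ (-(((p + 1 : ℕ) : ℝ) + 1 + (k : ℝ) ^ (-μ))) *
      ((2 * Real.cos θ) ^ (p + 2) + 4 * ((2 : ℝ) ^ ((k : ℝ) ^ (-μ)) - 1) * (2 * Real.cos θ) ^ p) =
      Real.cos θ ^ p * tensionFactor k μ θ := by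
    rw [hpow, tensionFactor, Real.sin_sq, mul_pow, mul_pow, pow_add 2 p 2]
    field_simp
    linear_combination 4 * Real.cos θ ^ p * hcancel ((k : ℝ) ^ (-μ))
  rw [symbolNS_succ_eq p hk, one_add_exp_neg_two_mul_I, ← hreal, hsq]
  push_cast
  ring

lemma norm_symbolNS_exp (p : ℕ) {k : ℕ} (hk : k ≠ 0) (μ θ : ℝ) :
    ‖symbolNS (p + 1) k μ (cexp (-(2 * θ * I)))‖ = |Real.cos θ| ^ p * tensionFactor k μ θ := by
  have hunit : ‖cexp (-(θ * I))‖ = 1 := by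
    simpa using Complex.norm_exp_ofReal_mul_I (-θ)
  rw [symbolNS_exp_eq p hk, norm_mul, norm_pow, hunit, one_pow, one_mul, Complex.norm_real,
    Real.norm_eq_abs, abs_mul, abs_pow,
    abs_of_nonneg ((sq_nonneg _).trans (cos_sq_le_tensionFactor k μ θ))]

lemma norm_partialProdNS_succ (p : ℕ) {m : ℕ} (hm : 1 ≤ m) (μ ω : ℝ) (M : ℕ) :
    ‖partialProdNS (p + 1) m μ ω (m + M)‖ =
      |∏ j ∈ Finset.range M, Real.cos (ω / 2 ^ (m + 1) / 2 ^ (j + 1))| ^ p *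
        ∏ j ∈ Finset.range M, tensionFactor (m + j) μ (ω / 2 ^ (m + 1) / 2 ^ (j + 1)) := by
  rw [partialProdNS, norm_prod, Finset.prod_Ico_eq_prod_range, Finset.abs_prod, ← Finset.prod_pow,
    ← Finset.prod_mul_distrib, Nat.add_sub_cancel_left]
  refine Finset.prod_congr rfl fun j _ => ?_
  rw [← norm_symbolNS_exp p (by omega)]
  congr 3
  push_cast
  field_simp
  ring

lemma tendsto_norm_partialProdNS {n m : ℕ} {μ ω : ℝ} {L : ℂ}
    (hL : Tendsto (partialProdNS n m μ ω) atTop (nhds L)) :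
    Tendsto (fun M => ‖partialProdNS n m μ ω (m + M)‖) atTop (nhds ‖L‖) :=
  (hL.comp (tendsto_atTop_mono (fun M => Nat.le_add_left M m) tendsto_id)).norm

variable {p m : ℕ} {μ ω : ℝ} {L : ℂ}

lemma norm_le_abs_sinc_pow_of_tendsto_partialProdNS (hm : 1 ≤ m)
    (hL : Tendsto (partialProdNS (p + 1) m μ ω) atTop (nhds L)) :
    ‖L‖ ≤ |Real.sinc (ω / 2 ^ (m + 1))| ^ p := by
  refine le_of_tendsto_of_tendsto' (tendsto_norm_partialProdNS hL)
    ((tendsto_prod_cos_div_two_pow _).abs.pow p) fun M => ?_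
  rw [norm_partialProdNS_succ p hm]
  exact mul_le_of_le_one_right (by positivity) <| Finset.prod_le_one
    (fun _ _ => (sq_nonneg _).trans (cos_sq_le_tensionFactor _ _ _))
    fun _ _ => tensionFactor_le_one _ _ _

lemma abs_sinc_pow_le_norm_of_tendsto_partialProdNS (hm : 1 ≤ m)
    (hL : Tendsto (partialProdNS (p + 1) m μ ω) atTop (nhds L)) :
    |Real.sinc (ω / 2 ^ (m + 1))| ^ (p + 2) ≤ ‖L‖ := by
  refine le_of_tendsto_of_tendsto' ((tendsto_prod_cos_div_two_pow _).abs.pow (p + 2))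
    (tendsto_norm_partialProdNS hL) fun M => ?_
  rw [norm_partialProdNS_succ p hm, pow_add, sq_abs, ← Finset.prod_pow]
  gcongr
  exact cos_sq_le_tensionFactor _ _ _

end Symbol

section Sobolev

/-- The weights `1, |j|⁻¹` bounding the translates of `Φ^{(n,m)}` in `StrangFixBounds`. -/
noncomputable def translateDecay (j : ℤ) : ℝ :=
  if j = 0 then 1 else |(j : ℝ)|⁻¹

lemma memLp_translateDecay : MemLp translateDecay 2 Measure.count := by
  rw [memLp_two_iff_integrable_sq (measurable_of_countable _).aestronglyMeasurable,
    integrable_count_iff]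
  refine (((Real.summable_one_div_int_pow.mpr one_lt_two).add
    (hasSum_ite_eq (0 : ℤ) (1 : ℝ)).summable).congr fun j => ?_).norm
  by_cases hj : j = 0 <;> simp [translateDecay, hj]

theorem strangFixBounds_of_tendsto_partialProdNS {p m : ℕ} {μ : ℝ} {Φ : ℝ → ℂ} (hp : 1 ≤ p)
    (hm : 1 ≤ m) (hΦ : ∀ ω, Tendsto (partialProdNS (p + 1) m μ ω) atTop (nhds (Φ ω))) :
    StrangFixBounds ((2 : ℝ) ^ (-(m : ℤ))) ((2 / Real.pi) ^ (p + 2)) p translateDecay Φ := by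
  set h : ℝ := 2 ^ (-(m : ℤ)) with hh
  have hpos : 0 < h := by positivity
  have hscale (x : ℝ) : x / 2 ^ (m + 1) = h * x / 2 := by
    rw [hh, zpow_neg, zpow_natCast, pow_succ]
    field_simp
  have habs (x : ℝ) : |h * x / 2| = h * |x| / 2 := by
    rw [abs_div, abs_mul, abs_of_pos hpos, abs_two]
  have hcell {x : ℝ} (hx : |x| ≤ Real.pi / h) : |h * x / 2| ≤ Real.pi / 2 := by
    rw [habs]
    gcongr
    exact (le_div_iff₀' hpos).mp hx
  refine ⟨fun j => ?_, fun x hx => ?_, fun x _ => ?_, fun x hx j hj => ?_⟩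
  · unfold translateDecay
    split_ifs <;> positivity
  · refine le_trans ?_ (abs_sinc_pow_le_norm_of_tendsto_partialProdNS hm (hΦ x))
    rw [hscale]
    gcongr
    exact (two_div_pi_le_sinc (hcell hx)).trans (le_abs_self _)
  · refine (norm_le_abs_sinc_pow_of_tendsto_partialProdNS hm (hΦ x)).trans ?_
    rw [translateDecay, if_pos rfl]
    exact pow_le_one₀ (abs_nonneg _) (Real.abs_sinc_le_one _)
  · have hshift : (x + j * (2 * Real.pi / h)) / 2 ^ (m + 1) = h * x / 2 + j * Real.pi := by
      rw [hscale]
      field_simp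
    have hj1 : (1 : ℝ) ≤ |(j : ℝ)| := by exact_mod_cast Int.one_le_abs hj
    have hdecay : |(j : ℝ)|⁻¹ ^ p ≤ |(j : ℝ)|⁻¹ :=
      pow_le_of_le_one (by positivity) (inv_le_one_of_one_le₀ hj1) (by omega)
    calc ‖Φ (x + j * (2 * Real.pi / h))‖
        ≤ |Real.sinc (h * x / 2 + j * Real.pi)| ^ p :=
          hshift ▸ norm_le_abs_sinc_pow_of_tendsto_partialProdNS hm (hΦ _)
      _ ≤ (|h * x / 2| / |(j : ℝ)|) ^ p := by
          gcongr
          exact abs_sinc_add_int_mul_pi_le (hcell hx) hj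
      _ = |(j : ℝ)|⁻¹ ^ p * (h * |x| / 2) ^ p := by
          rw [habs, ← mul_pow, div_eq_inv_mul _ |(j : ℝ)|]
      _ ≤ translateDecay j * (h * |x|) ^ p := by
          rw [translateDecay, if_neg hj]
          gcongr
          exact half_le_self (by positivity)

lemma abs_pow_le_one_add_sq_rpow (p : ℕ) (x : ℝ) : |x| ^ p ≤ (1 + x ^ 2) ^ ((p : ℝ) / 2) := by
  rw [div_eq_inv_mul, Real.rpow_mul (by positivity), Real.rpow_natCast, ← one_div,
    ← Real.sqrt_eq_rpow]
  gcongr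
  exact Real.abs_le_sqrt (by linarith)

lemma eLpNorm_abs_pow_smul_le {E : Type*} [NormedAddCommGroup E] [NormedSpace ℝ E] {F : ℝ → E}
    (p : ℕ) (q : ENNReal) (ν : Measure ℝ) :
    eLpNorm (fun ω => |ω| ^ p • F ω) q ν ≤
      eLpNorm (fun ω => (1 + ω ^ 2) ^ ((p : ℝ) / 2) • F ω) q ν := by
  refine eLpNorm_mono fun ω => ?_
  rw [norm_smul, norm_smul, norm_pow, Real.norm_eq_abs, abs_abs]
  gcongr
  exact (abs_pow_le_one_add_sq_rpow p ω).trans (Real.le_norm_self _)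

lemma memLp_of_memLp_one_add_sq_rpow_smul {E : Type*} [NormedAddCommGroup E] [NormedSpace ℝ E]
    {F : ℝ → E} {r : ℝ} (hr : 0 ≤ r) {q : ENNReal} {ν : Measure ℝ}
    (hF : MemLp (fun ω => (1 + ω ^ 2) ^ r • F ω) q ν) : MemLp F q ν := by
  have hweight (ω : ℝ) : 1 ≤ (1 + ω ^ 2) ^ r :=
    Real.one_le_rpow (le_add_of_nonneg_right (sq_nonneg ω)) hr
  have hinv : Continuous fun ω : ℝ => ((1 + ω ^ 2) ^ r)⁻¹ :=
    (Continuous.rpow_const (by fun_prop) fun _ => Or.inr hr).inv₀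
      fun ω => (one_pos.trans_le (hweight ω)).ne'
  have hcancel : (fun ω => ((1 + ω ^ 2) ^ r)⁻¹ • (1 + ω ^ 2) ^ r • F ω) = F :=
    funext fun ω => inv_smul_smul₀ (one_pos.trans_le (hweight ω)).ne' _
  refine hF.mono (hcancel ▸ hinv.aestronglyMeasurable.smul hF.aestronglyMeasurable)
    (ae_of_all _ fun ω => ?_)
  rw [norm_smul]
  exact le_mul_of_one_le_left (norm_nonneg _) ((hweight ω).trans (Real.le_norm_self _))

end Sobolev

theorem approximation_order_general (n : ℕ) (hn : 2 ≤ n) :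
    ∃ C : ℝ, ∀ (μ : ℝ) (m : ℕ), 1 ≤ m → ∀ φ : ℝ → ℂ, Integrable φ → MemLp φ 2 →
      (∀ ω, Tendsto (partialProdNS n m μ ω) atTop (nhds (angularFourier φ ω))) →
      ∀ f F : ℝ → ℂ, MemLp f 2 → IsFourierPlancherel f F →
        MemLp (fun ω : ℝ => ((1 + ω ^ 2) ^ (((n : ℝ) - 1) / 2) : ℝ) • F ω) 2 volume →
      ∀ ε : ℝ, 0 < ε → ∃ (s : Finset ℤ) (c : ℤ → ℂ),
        eLpNorm (fun x => f x - ∑ α ∈ s, c α * φ (x - (2 : ℝ) ^ (-(m : ℤ)) * α)) 2 volume ≤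
          ENNReal.ofReal (C * (eLpNorm (fun ω : ℝ =>
              ((1 + ω ^ 2) ^ (((n : ℝ) - 1) / 2) : ℝ) • F ω) 2 volume).toReal *
            (2 : ℝ) ^ (-((m : ℝ) * ((n : ℝ) - 1))) + ε) := by
  obtain ⟨p, rfl⟩ : ∃ p, n = p + 1 := ⟨n - 1, by omega⟩
  set κ : ℝ := (2 / Real.pi) ^ (p + 2)
  set B := 1 + eLpNorm translateDecay 2 Measure.count * ENNReal.ofReal κ⁻¹
  have hB : B ≠ ⊤ := by
    have := memLp_translateDecay.eLpNorm_ne_top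
    finiteness
  refine ⟨B.toReal, fun μ m hm φ hφ1 hφ2 hφ f F hf hfF hSob ε hε => ?_⟩
  simp only [Nat.cast_succ, add_sub_cancel_right] at hSob ⊢
  set W := eLpNorm (fun ω : ℝ => (1 + ω ^ 2) ^ ((p : ℝ) / 2) • F ω) 2 volume
  have hstep : ((2 : ℝ) ^ (-(m : ℤ))) ^ p = 2 ^ (-((m : ℝ) * p)) := by
    rw [← Real.rpow_intCast, ← Real.rpow_natCast, ← Real.rpow_mul two_pos.le]
    push_cast
    rw [neg_mul]
  obtain ⟨s, c, hsc⟩ := (strangFixBounds_of_tendsto_partialProdNS (by omega) hm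
    hφ).exists_eLpNorm_sub_sum_shift_le (by positivity) (by positivity) memLp_translateDecay hφ1 hφ2
      hf hfF (memLp_of_memLp_one_add_sq_rpow_smul (by positivity) hSob)
      (ENNReal.ofReal_pos.mpr hε).ne'
  refine ⟨s, c, hsc.trans ?_⟩
  rw [ENNReal.ofReal_add (by positivity) hε.le, ENNReal.ofReal_mul (by positivity),
    ENNReal.ofReal_mul (by positivity), ENNReal.ofReal_toReal hB,
    ENNReal.ofReal_toReal hSob.eLpNorm_ne_top, hstep, mul_right_comm]
  gcongr
  exact eLpNorm_abs_pow_smul_le p 2 volume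

/-- Approximation order (Corollary 4.4): if for each `m ≥ 1` the continuous compactly
supported function `φ m` has Fourier transform `Φ^{(n,m)}`, then for every
`f ∈ H^{n-1}(ℝ)` (membership expressed through its Fourier–Plancherel transform `F`)
there is a constant `C`, independent of `m`, with
`inf_{g ∈ V^{(n,m)}} ‖f − g‖_{L²} ≤ C · 2^{-m(n-1)}`; the infimum over the closed span
`V^{(n,m)}` of the `2^{-m}`-shifts of `φ m` is expressed via finite linear combinations. -/
theorem approximation_order (n : ℕ) (hn : 2 ≤ n) (μ : ℝ) (hμ : 1 < μ)
    (Φ : ℕ → ℝ → ℂ)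
    (hΦ : ∀ m : ℕ, ∀ ω : ℝ,
      Tendsto (fun N => partialProdNS n m μ ω N) atTop (nhds (Φ m ω)))
    (φ : ℕ → ℝ → ℝ)
    (hφc : ∀ m, 1 ≤ m → Continuous (φ m))
    (hφs : ∀ m, 1 ≤ m → HasCompactSupport (φ m))
    (hφF : ∀ m, 1 ≤ m → ∀ ω : ℝ,
      ∫ x : ℝ, (φ m x : ℂ) * Complex.exp (-(Complex.I * ω * x)) = Φ m ω)
    (f F : ℝ → ℂ)
    (hf : MemLp f 2 volume)
    (hF : Tendsto (fun R : ℝ => eLpNorm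
        (fun ω : ℝ => F ω - ∫ x in (-R)..R, f x * Complex.exp (-(Complex.I * ω * x)))
        2 volume) atTop (nhds 0))
    (hSob : MemLp (fun ω : ℝ => ((1 + ω ^ 2) ^ (((n : ℝ) - 1) / 2) : ℝ) • F ω) 2 volume) :
    ∃ C : ℝ, ∀ m : ℕ, 1 ≤ m → ∀ ε : ℝ, 0 < ε →
      ∃ (s : Finset ℤ) (c : ℤ → ℂ),
        eLpNorm (fun x : ℝ =>
            f x - ∑ α ∈ s, c α * (φ m (x - (2 : ℝ) ^ (-(m : ℤ)) * α) : ℂ)) 2 volume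
          ≤ ENNReal.ofReal (C * (2 : ℝ) ^ (-((m : ℝ) * ((n : ℝ) - 1))) + ε) := by
  obtain ⟨C, hC⟩ := approximation_order_general n hn
  have hφ (m : ℕ) (hm : 1 ≤ m) : Continuous fun x => (φ m x : ℂ) :=
    continuous_ofReal.comp (hφc m hm)
  have hφ' (m : ℕ) (hm : 1 ≤ m) : HasCompactSupport fun x => (φ m x : ℂ) :=
    (hφs m hm).comp_left ofReal_zero
  exact ⟨_, fun m hm => hC μ m hm _ ((hφ m hm).integrable_of_hasCompactSupport (hφ' m hm))
    ((hφ m hm).memLp_of_hasCompactSupport (hφ' m hm))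
    (fun ω => (hΦ m ω).mono_right (congrArg nhds (hφF m hm ω)).ge) f F hf hF hSob⟩
end
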